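/- Let n ≥ 4 and let S be a minimal dominating set of the flower snark J_n. If some copy J^i has weight 3 in S, then both adjacent copies J^{i−1} and J^{i+1} (indices mod n) have weight 1 in S. -/

import Mathlib

/-- Vertices of the flower snark `J_n`: a copy index `i : Fin n` together with
one of the four vertices of the copy: `0 = a`, `1 = b`, `2 = c`, `3 = d`. -/
abbrev FV (n : ℕ) := Fin n × Fin 4

/-- The flower snark `J_n`: in each copy, `a^i` is adjacent to `b^i, c^i, d^i`;
the `b` vertices form an `n`-cycle; the `c` and `d` vertices form a `2n`-cycle
via the paths `c^i c^{i+1}`, `d^i d^{i+1}` (for `1 ≤ i ≤ n-1`) together with the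
twist edges `c^n d^1` and `d^n c^1`. -/
def flowerSnark (n : ℕ) : SimpleGraph (FV n) :=
  SimpleGraph.fromRel (fun v w =>
    (v.1 = w.1 ∧ v.2 = 0 ∧ w.2 ≠ 0) ∨
    (((v.1 : ℕ) + 1) % n = (w.1 : ℕ) ∧ v.2 = 1 ∧ w.2 = 1) ∨
    ((v.1 : ℕ) + 1 = (w.1 : ℕ) ∧ v.2 = 2 ∧ w.2 = 2) ∨
    ((v.1 : ℕ) + 1 = (w.1 : ℕ) ∧ v.2 = 3 ∧ w.2 = 3) ∨
    ((v.1 : ℕ) = n - 1 ∧ (w.1 : ℕ) = 0 ∧ v.2 = 2 ∧ w.2 = 3) ∨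
    ((v.1 : ℕ) = n - 1 ∧ (w.1 : ℕ) = 0 ∧ v.2 = 3 ∧ w.2 = 2))

/-- `S` is a dominating set of `J_n`. -/
def Dominating (n : ℕ) (S : Set (FV n)) : Prop :=
  ∀ v ∉ S, ∃ w ∈ S, (flowerSnark n).Adj v w

/-- `S` is a minimal dominating set of `J_n`. -/
def MinimalDominating (n : ℕ) (S : Set (FV n)) : Prop :=
  Dominating n S ∧ ∀ T : Set (FV n), T ⊂ S → ¬ Dominating n T

/-- `S` is an independent set of `J_n`. -/
def IndependentSet (n : ℕ) (S : Set (FV n)) : Prop :=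
  ∀ v ∈ S, ∀ w ∈ S, ¬ (flowerSnark n).Adj v w

/-- `S` is a 2-dominating set of `J_n`: every vertex outside `S` has at least
two neighbours in `S`. -/
def TwoDominating (n : ℕ) (S : Set (FV n)) : Prop :=
  ∀ v ∉ S, ∃ w₁ ∈ S, ∃ w₂ ∈ S, w₁ ≠ w₂ ∧
    (flowerSnark n).Adj v w₁ ∧ (flowerSnark n).Adj v w₂

/-- `S` is a total dominating set of `J_n`. -/
def TotalDominating (n : ℕ) (S : Set (FV n)) : Prop :=
  ∀ v : FV n, ∃ w ∈ S, (flowerSnark n).Adj v w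

/-- `S` is a connected dominating set of `J_n`. -/
def ConnectedDominating (n : ℕ) (S : Set (FV n)) : Prop :=
  Dominating n S ∧ ((flowerSnark n).induce S).Connected

/-- `S` is a secure dominating set of `J_n`. -/
def SecureDominating (n : ℕ) (S : Set (FV n)) : Prop :=
  Dominating n S ∧ ∀ v ∉ S, ∃ w ∈ S,
    (flowerSnark n).Adj v w ∧ Dominating n (insert v (S \ {w}))

/-- `v` is undefended with respect to `f`: neither `v` nor any of its
neighbours carries a guard. -/
def Undefended (n : ℕ) (f : FV n → ℕ) (v : FV n) : Prop :=
  f v = 0 ∧ ∀ w, (flowerSnark n).Adj v w → f w = 0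

/-- `f` is a weak Roman dominating function on `J_n`: `f` takes values in
`{0,1,2}`, has no undefended vertex, and every vertex `v` with `f v = 0` has a
neighbour `w` with `f w ≥ 1` such that moving one guard from `w` to `v` leaves
no undefended vertex. -/
def WeakRomanDominating (n : ℕ) (f : FV n → ℕ) : Prop :=
  (∀ v, f v ≤ 2) ∧ (∀ v, ¬ Undefended n f v) ∧
  ∀ v, f v = 0 → ∃ w, (flowerSnark n).Adj v w ∧ 1 ≤ f w ∧
    ∀ u, ¬ Undefended n
      (fun x => if x = v then 1 else if x = w then f w - 1 else f x) u

/-- The domination number of `J_n`. -/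
noncomputable def dominationNumber (n : ℕ) : ℕ :=
  sInf {k | ∃ S : Set (FV n), Dominating n S ∧ S.ncard = k}

/-- The independent domination number of `J_n`. -/
noncomputable def indepDominationNumber (n : ℕ) : ℕ :=
  sInf {k | ∃ S : Set (FV n), Dominating n S ∧ IndependentSet n S ∧ S.ncard = k}

/-- The upper domination number of `J_n`: the maximum cardinality of a minimal
dominating set. -/
noncomputable def upperDominationNumber (n : ℕ) : ℕ :=
  sSup {k | ∃ S : Set (FV n), MinimalDominating n S ∧ S.ncard = k}

/-- The 2-domination number of `J_n`. -/
noncomputable def twoDominationNumber (n : ℕ) : ℕ :=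
  sInf {k | ∃ S : Set (FV n), TwoDominating n S ∧ S.ncard = k}

/-- The total domination number of `J_n`. -/
noncomputable def totalDominationNumber (n : ℕ) : ℕ :=
  sInf {k | ∃ S : Set (FV n), TotalDominating n S ∧ S.ncard = k}

/-- The connected domination number of `J_n`. -/
noncomputable def connectedDominationNumber (n : ℕ) : ℕ :=
  sInf {k | ∃ S : Set (FV n), ConnectedDominating n S ∧ S.ncard = k}

/-- The secure domination number of `J_n`. -/
noncomputable def secureDominationNumber (n : ℕ) : ℕ :=
  sInf {k | ∃ S : Set (FV n), SecureDominating n S ∧ S.ncard = k}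

/-- The weak Roman domination number of `J_n`. -/
noncomputable def weakRomanDominationNumber (n : ℕ) : ℕ :=
  sInf {k | ∃ f : FV n → ℕ, WeakRomanDominating n f ∧ ∑ v, f v = k}

/-- The weight of the copy `J^(m mod n)` in a vertex set `S`, i.e. the number
of vertices of `S` among `a, b, c, d` of that copy. -/
noncomputable def copyWeight {n : ℕ} (S : Set (FV n)) (m : ℕ) : ℕ :=
  (S ∩ {v : FV n | (v.1 : ℕ) = m % n}).ncard

/-- The weight of the copy `J^(m mod n)` in a function `f`, i.e.
`f a + f b + f c + f d` over that copy. -/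
def fCopyWeight {n : ℕ} (f : FV n → ℕ) (m : ℕ) : ℕ :=
  ∑ v ∈ Finset.univ.filter (fun v : FV n => (v.1 : ℕ) = m % n), f v

/-!
For `n ≥ 3` the flower snark `J_n` is covered by an infinite ladder with copies indexed by `ℤ`, in
which the twist disappears. A dominating set is minimal iff each of its vertices has a private
neighbour, a condition on closed neighbourhoods only, so it lifts along coverings and it suffices to
treat the ladder.

There, let copy `k` have weight 3. A rim vertex of copy `k` lying in `S` has its private neighbour
on one of its two sides (or is its own), and a private neighbour on a side empties its lane and the
hub of the copy on that side. As every copy meets `S`, this leaves only one vertex of `S` on either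
side.
-/

section Domination

variable {V W : Type*} {G : SimpleGraph V} {H : SimpleGraph W} {S : Set V} {u v w : V}

/-- The closed neighbourhood `N[v]` of a vertex. -/
def closedNeighborSet (G : SimpleGraph V) (v : V) : Set V :=
  insert v (G.neighborSet v)

/-- Dominating sets of an arbitrary graph, encoded as the sets meeting every closed
neighbourhood. -/
def IsDominatingSet (G : SimpleGraph V) (S : Set V) : Prop :=
  ∀ v, (closedNeighborSet G v ∩ S).Nonempty

/-- `u` is a private neighbour of `v` with respect to `S`: the set `S` dominates `u` through `v`
only. The case `u = v` is allowed, and says that `v` is isolated in `S`. -/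
def IsPrivateNeighbor (G : SimpleGraph V) (S : Set V) (v u : V) : Prop :=
  closedNeighborSet G u ∩ S = {v}

/-- Coverings of simple graphs: `f` maps each closed neighbourhood bijectively onto a closed
neighbourhood. Surjectivity of `f` is not required. -/
def IsGraphCovering (G : SimpleGraph V) (H : SimpleGraph W) (f : V → W) : Prop :=
  ∀ v, Set.BijOn f (closedNeighborSet G v) (closedNeighborSet H (f v))

lemma mem_closedNeighborSet : w ∈ closedNeighborSet G v ↔ w = v ∨ G.Adj v w :=
  Iff.rfl

lemma mem_closedNeighborSet_comm : w ∈ closedNeighborSet G v ↔ v ∈ closedNeighborSet G w := by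
  rw [mem_closedNeighborSet, mem_closedNeighborSet, eq_comm, G.adj_comm]

lemma IsDominatingSet.mono {T : Set V} (hS : IsDominatingSet G S) (hST : S ⊆ T) :
    IsDominatingSet G T :=
  fun v ↦ (hS v).mono (Set.inter_subset_inter_right _ hST)

lemma IsPrivateNeighbor.mem_closedNeighborSet (h : IsPrivateNeighbor G S v u) :
    v ∈ closedNeighborSet G u :=
  (h.ge rfl).1

lemma IsPrivateNeighbor.notMem (h : IsPrivateNeighbor G S v u) (hw : w ∈ closedNeighborSet G u)
    (hwv : w ≠ v) : w ∉ S :=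
  fun hwS ↦ hwv (h.le ⟨hw, hwS⟩)

theorem minimal_isDominatingSet_iff : Minimal (IsDominatingSet G) S ↔
    IsDominatingSet G S ∧ ∀ v ∈ S, ∃ u, IsPrivateNeighbor G S v u := by
  rw [Set.minimal_iff_forall_sdiff_singleton fun _ _ ↦ IsDominatingSet.mono]
  refine and_congr_right fun hS ↦ forall₂_congr fun v _ ↦ ?_
  simp only [IsDominatingSet, not_forall, Set.not_nonempty_iff_eq_empty, ← Set.inter_sdiff_assoc,
    Set.sdiff_eq_empty, IsPrivateNeighbor]
  exact exists_congr fun u ↦ (hS u).subset_singleton_iff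

theorem minimal_isDominatingSet_preimage {f : V → W} {T : Set W} (hf : IsGraphCovering G H f)
    (hT : Minimal (IsDominatingSet H) T) : Minimal (IsDominatingSet G) (f ⁻¹' T) := by
  rw [minimal_isDominatingSet_iff] at hT ⊢
  obtain ⟨hdom, hpriv⟩ := hT
  constructor
  · intro v
    obtain ⟨_, hy, hyT⟩ := hdom (f v)
    obtain ⟨w, hw, rfl⟩ := (hf v).surjOn hy
    exact ⟨w, hw, hyT⟩
  · intro v hv
    obtain ⟨y, hy⟩ := hpriv (f v) hv
    obtain ⟨u, hu, rfl⟩ := (hf v).surjOn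
      (mem_closedNeighborSet_comm.1 hy.mem_closedNeighborSet)
    have hvu : v ∈ closedNeighborSet G u := mem_closedNeighborSet_comm.1 hu
    refine ⟨u, Set.eq_singleton_iff_unique_mem.2 ⟨⟨hvu, hv⟩, ?_⟩⟩
    rintro w ⟨hw, hwT⟩
    exact (hf u).injOn hw hvu (hy.le ⟨(hf u).mapsTo hw, hwT⟩)

end Domination

section FlowerLadder

/-- The infinite flower ladder, the common cover of the flower snarks: copies are indexed by
`ℤ`, the hub `0` of a copy is joined to its rim vertices `1, 2, 3`, and each of the three rim lanes
is a two-way infinite path. -/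
def flowerLadder : SimpleGraph (ℤ × Fin 4) where
  Adj v w := (v.1 = w.1 ∧ (v.2 = 0 ↔ w.2 ≠ 0)) ∨ (v.2 = w.2 ∧ v.2 ≠ 0 ∧ |v.1 - w.1| = 1)
  symm := ⟨fun v w ↦ by rw [abs_sub_comm]; grind⟩
  loopless := ⟨fun v ↦ by simp⟩

/-- The part of a vertex set of the ladder in copy `k`, as a set of lanes. -/
abbrev copySlice (S : Set (ℤ × Fin 4)) (k : ℤ) : Set (Fin 4) :=
  Prod.mk k ⁻¹' S

lemma flowerLadder_adj {v w : ℤ × Fin 4} : flowerLadder.Adj v w ↔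
    (v.1 = w.1 ∧ (v.2 = 0 ↔ w.2 ≠ 0)) ∨ (v.2 = w.2 ∧ v.2 ≠ 0 ∧ |v.1 - w.1| = 1) :=
  Iff.rfl

lemma abs_sub_le_one_of_mem_closedNeighborSet {v w : ℤ × Fin 4}
    (h : w ∈ closedNeighborSet flowerLadder v) : |v.1 - w.1| ≤ 1 := by
  rcases h with rfl | ⟨h, -⟩ | ⟨-, -, h⟩
  · simp
  · simp [h]
  · exact h.le

lemma mem_closedNeighborSet_hub {k : ℤ} {w : ℤ × Fin 4} :
    w ∈ closedNeighborSet flowerLadder (k, 0) ↔ w.1 = k := by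
  simp only [mem_closedNeighborSet, flowerLadder_adj, Prod.ext_iff]
  grind

lemma mem_closedNeighborSet_rim {k : ℤ} {x : Fin 4} (hx : x ≠ 0) {w : ℤ × Fin 4} :
    w ∈ closedNeighborSet flowerLadder (k, x) ↔
      w = (k, x) ∨ w = (k, 0) ∨ ∃ e : ℤˣ, w = (k + e, x) := by
  have hside (j : ℤ) : (∃ e : ℤˣ, j = k + e) ↔ |k - j| = 1 := by
    rw [← Int.isUnit_iff_abs_eq, ← IsUnit.neg_iff, neg_sub]
    exact exists_congr fun e ↦ by rw [eq_sub_iff_add_eq']; exact eq_comm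
  simp only [mem_closedNeighborSet, flowerLadder_adj, Prod.ext_iff, exists_and_right, hside]
  grind

-- The sign `e = ±1` selects one of the two sides of copy `k`.
variable {S : Set (ℤ × Fin 4)} {k : ℤ} {x y z : Fin 4} {e : ℤˣ}

lemma IsPrivateNeighbor.notMem_of_side
    (h : IsPrivateNeighbor flowerLadder S (k, x) (k + e, x)) (hx : x ≠ 0) :
    (k + e, x) ∉ S ∧ (k + e, (0 : Fin 4)) ∉ S ∧ (k + e + e, x) ∉ S := by
  refine ⟨h.notMem ?_ ?_, h.notMem ?_ ?_, h.notMem ?_ ?_⟩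
  any_goals rw [mem_closedNeighborSet_rim hx]
  · exact Or.inl rfl
  · simp
  · exact Or.inr (Or.inl rfl)
  · simp
  · exact Or.inr (Or.inr ⟨e, rfl⟩)
  · simp [add_assoc, ← two_mul]

lemma nonempty_copySlice_of_isDominatingSet (hS : IsDominatingSet flowerLadder S) (k : ℤ) :
    (copySlice S k).Nonempty := by
  obtain ⟨⟨j, t⟩, hj, ht⟩ := hS (k, 0)
  obtain rfl : j = k := mem_closedNeighborSet_hub.1 hj
  exact ⟨t, ht⟩

lemma exists_isPrivateNeighbor_side (hS : Minimal (IsDominatingSet flowerLadder) S)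
    (hx : x ≠ 0) (hxS : (k, x) ∈ S) (hyS : (k, y) ∈ S) (hyx : y ≠ x)
    (hdom : (k, (0 : Fin 4)) ∈ S ∨ ∃ e : ℤˣ, (k + e, x) ∈ S) :
    ∃ e : ℤˣ, IsPrivateNeighbor flowerLadder S (k, x) (k + e, x) := by
  obtain ⟨u, hu⟩ := (minimal_isDominatingSet_iff.1 hS).2 _ hxS
  rcases (mem_closedNeighborSet_rim hx).1
    (mem_closedNeighborSet_comm.1 hu.mem_closedNeighborSet) with rfl | rfl | ⟨e, rfl⟩
  · exfalso
    rcases hdom with h0 | ⟨e, he⟩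
    · exact hu.notMem ((mem_closedNeighborSet_rim hx).2 (Or.inr (Or.inl rfl)))
        (by simp [hx.symm]) h0
    · exact hu.notMem ((mem_closedNeighborSet_rim hx).2 (Or.inr (Or.inr ⟨e, rfl⟩)))
        (by simp) he
  · exact absurd hyS (hu.notMem (mem_closedNeighborSet_hub.2 rfl) (by simp [hyx]))
  · exact ⟨e, hu⟩

lemma isPrivateNeighbor_neg_side (hS : Minimal (IsDominatingSet flowerLadder) S)
    (hx : x ≠ 0) (hxS : (k, x) ∈ S) (hyS : (k, y) ∈ S) (hyx : y ≠ x) (he : (k + e, x) ∈ S) :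
    IsPrivateNeighbor flowerLadder S (k, x) (k + (-e : ℤˣ), x) := by
  obtain ⟨e', he'⟩ := exists_isPrivateNeighbor_side hS hx hxS hyS hyx (Or.inr ⟨e, he⟩)
  have hne : e' ≠ e := by
    rintro rfl
    exact (he'.notMem_of_side hx).1 he
  rwa [Int.units_ne_iff_eq_neg.1 hne] at he'

lemma exists_lane_notMem_of_hub_mem (hS : Minimal (IsDominatingSet flowerLadder) S)
    (h0 : (k, (0 : Fin 4)) ∈ S) (hxS : (k, x) ∈ S) (hx : x ≠ 0) :
    ∃ z, (k, z) ∉ S ∧ ∀ e : ℤˣ, (k + e, z) ∉ S := by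
  obtain ⟨⟨j, z⟩, hu⟩ := (minimal_isDominatingSet_iff.1 hS).2 _ h0
  obtain rfl : j = k := mem_closedNeighborSet_hub.1
    (mem_closedNeighborSet_comm.1 hu.mem_closedNeighborSet)
  have hz : z ≠ 0 := by
    rintro rfl
    exact hu.notMem (mem_closedNeighborSet_hub.2 rfl) (by simp [hx]) hxS
  refine ⟨z, hu.notMem (Or.inl rfl) (by simp [hz]), fun e ↦ hu.notMem ?_ (by simp)⟩
  exact (mem_closedNeighborSet_rim hz).2 (Or.inr (Or.inr ⟨e, rfl⟩))

-- Each of the two occupied rim lanes has its private neighbour on one side of copy `k`; they lie on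
-- different sides, as otherwise the copy on that side would be empty.
lemma exists_copySlice_side_eq_singleton_of_hub_mem (hS : Minimal (IsDominatingSet flowerLadder) S)
    (hcopy : copySlice S k = {z}ᶜ) (hz : z ≠ 0) (e : ℤˣ) :
    ∃ y, copySlice S (k + e) = {y} := by
  have mem {t : Fin 4} : (k, t) ∈ S ↔ t ≠ z := Set.ext_iff.1 hcopy t
  obtain ⟨x, y, hx, hy, hxz, hyz, hlanes⟩ : ∃ x y : Fin 4, x ≠ 0 ∧ y ≠ 0 ∧
      x ≠ z ∧ y ≠ z ∧ ∀ t, t = 0 ∨ t = x ∨ t = y ∨ t = z := by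
    clear mem hcopy; revert z; decide
  have h0 : (k, (0 : Fin 4)) ∈ S := mem.2 hz.symm
  have hzside (e : ℤˣ) : (k + e, z) ∉ S := by
    obtain ⟨z', hz', hside⟩ := exists_lane_notMem_of_hub_mem hS h0 (mem.2 hxz) hx
    obtain rfl : z' = z := by simpa [mem] using hz'
    exact hside e
  obtain ⟨ex, hex⟩ := exists_isPrivateNeighbor_side hS hx (mem.2 hxz) h0 hx.symm (Or.inl h0)
  obtain ⟨ey, hey⟩ := exists_isPrivateNeighbor_side hS hy (mem.2 hyz) h0 hy.symm (Or.inl h0)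
  obtain ⟨hxS, h0x, -⟩ := hex.notMem_of_side hx
  obtain ⟨hyS, h0y, -⟩ := hey.notMem_of_side hy
  have hdom (e : ℤˣ) := nonempty_copySlice_of_isDominatingSet hS.prop (k + e)
  rcases eq_or_ne ex e with rfl | hxe
  · refine ⟨y, (hdom ex).subset_singleton_iff.1 fun t ht ↦ ?_⟩
    rcases hlanes t with rfl | rfl | rfl | rfl
    exacts [absurd ht h0x, absurd ht hxS, rfl, absurd ht (hzside ex)]
  rcases eq_or_ne ey e with rfl | hye
  · refine ⟨x, (hdom ey).subset_singleton_iff.1 fun t ht ↦ ?_⟩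
    rcases hlanes t with rfl | rfl | rfl | rfl
    exacts [absurd ht h0y, rfl, absurd ht hyS, absurd ht (hzside ey)]
  obtain rfl : ex = ey :=
    (Int.units_ne_iff_eq_neg.1 hxe).trans (Int.units_ne_iff_eq_neg.1 hye).symm
  obtain ⟨t, ht⟩ := hdom ex
  rcases hlanes t with rfl | rfl | rfl | rfl
  exacts [absurd ht h0x, absurd ht hxS, absurd ht hyS, absurd ht (hzside ex)]

-- Two vertices of `S` in copy `k + e` would have their private neighbours one copy further out,
-- which together with `hx'` would leave that copy empty.
lemma copySlice_side_subsingleton (hS : Minimal (IsDominatingSet flowerLadder) S)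
    (hhub : (k + e, (0 : Fin 4)) ∉ S) (hx : (k + e, x) ∉ S) (hx' : (k + e + e, x) ∉ S)
    (hx0 : x ≠ 0) (hrim : ∀ t ≠ 0, (k, t) ∈ S) : (copySlice S (k + e)).Subsingleton := by
  by_contra hsub
  obtain ⟨y, hy, z, hz, hyz⟩ := Set.not_subsingleton_iff.1 hsub
  have ne_of_mem {t : Fin 4} (ht : (k + ↑e, t) ∈ S) : t ≠ 0 ∧ t ≠ x := by
    constructor <;> rintro rfl <;> contradiction
  have outer {t s : Fin 4} (ht : (k + ↑e, t) ∈ S) (hs : (k + ↑e, s) ∈ S) (hst : s ≠ t) :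
      (k + e + e, (0 : Fin 4)) ∉ S ∧ (k + e + e, t) ∉ S := by
    have ht0 := (ne_of_mem ht).1
    have hback : (k + e + (-e : ℤˣ), t) ∈ S := by simpa using hrim t ht0
    have hpriv := isPrivateNeighbor_neg_side hS ht0 ht hs hst hback
    rw [neg_neg] at hpriv
    obtain ⟨ht, h0, -⟩ := hpriv.notMem_of_side ht0
    exact ⟨h0, ht⟩
  obtain ⟨h0, hy'⟩ := outer hy hz hyz.symm
  obtain ⟨-, hz'⟩ := outer hz hy hyz
  obtain ⟨t, ht⟩ := nonempty_copySlice_of_isDominatingSet hS.prop (k + e + e)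
  have hlanes : t = 0 ∨ t = x ∨ t = y ∨ t = z := by
    have hy0 := ne_of_mem hy
    have hz0 := ne_of_mem hz
    lia
  rcases hlanes with rfl | rfl | rfl | rfl
  exacts [h0 ht, hx' ht, hy' ht, hz' ht]

lemma exists_copySlice_side_eq_singleton_of_hub_notMem
    (hS : Minimal (IsDominatingSet flowerLadder) S) (hcopy : copySlice S k = {0}ᶜ) (e : ℤˣ) :
    ∃ y, copySlice S (k + e) = {y} := by
  have hrim (t : Fin 4) (ht : t ≠ 0) : (k, t) ∈ S := hcopy.ge ht
  have hdom (j : ℤ) := nonempty_copySlice_of_isDominatingSet hS.prop j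
  have hpriv {t : Fin 4} {e : ℤˣ} (ht : t ≠ 0) (hte : (k + e, t) ∈ S) :
      (k + (-e : ℤˣ), t) ∉ S ∧ (k + (-e : ℤˣ), (0 : Fin 4)) ∉ S ∧
        (k + (-e : ℤˣ) + (-e : ℤˣ), t) ∉ S := by
    obtain ⟨s, hs, hst⟩ : ∃ s : Fin 4, s ≠ 0 ∧ s ≠ t := by clear hte; revert t; decide
    exact (isPrivateNeighbor_neg_side hS ht (hrim t ht) (hrim s hs) hst hte).notMem_of_side ht
  by_cases hocc : ∃ y ≠ 0, (k + e, y) ∈ S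
  · obtain ⟨y, hy, hyS⟩ := hocc
    obtain ⟨-, h0, -⟩ := hpriv hy hyS
    obtain ⟨x, hxS⟩ := hdom (k + (-e : ℤˣ))
    have hx : x ≠ 0 := by
      rintro rfl
      exact h0 hxS
    have hx' := hpriv hx hxS
    rw [neg_neg] at hx'
    obtain ⟨hx₁, hhub, hx₂⟩ := hx'
    exact ⟨y, (copySlice_side_subsingleton hS hhub hx₁ hx₂ hx hrim).eq_singleton_of_mem hyS⟩
  · push Not at hocc
    refine ⟨0, (hdom (k + e)).subset_singleton_iff.1 fun t ht ↦ ?_⟩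
    by_contra ht0
    exact hocc t ht0 ht

theorem ncard_copySlice_side_eq_one (hS : Minimal (IsDominatingSet flowerLadder) S)
    (hcopy : (copySlice S k).ncard = 3) (e : ℤˣ) :
    (copySlice S (k + e)).ncard = 1 := by
  obtain ⟨z, hz⟩ : ∃ z, (copySlice S k)ᶜ = {z} := by
    rw [← Set.ncard_eq_one, Set.ncard_compl, hcopy, Nat.card_fin]
  rw [compl_eq_comm, eq_comm] at hz
  rw [Set.ncard_eq_one]
  rcases eq_or_ne z 0 with rfl | hz0
  · exact exists_copySlice_side_eq_singleton_of_hub_notMem hS hz e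
  · exact exists_copySlice_side_eq_singleton_of_hub_mem hS hz hz0 e

end FlowerLadder

section FlowerCover

open scoped Fin.CommRing

variable {n : ℕ} [NeZero n] {k : ℤ}

/-- The shift of `J_n` to the next copy, which follows the rim edges: the lanes `2` and `3` are
interchanged on the way from the last copy to the first. -/
def nextCopy (v : FV n) : FV n :=
  (v.1 + 1, if v.1 + 1 = 0 then Equiv.swap 2 3 v.2 else v.2)

/-- The covering of `J_n` by the flower ladder, winding around `J_n` and applying the twist of the
lanes `2` and `3` once per turn. -/
def flowerCover (n : ℕ) [NeZero n] (v : ℤ × Fin 4) : FV n :=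
  ((v.1 : Fin n), (Equiv.swap 2 3 ^ (v.1 / n)) v.2)

lemma nextCopy_injective : Function.Injective (nextCopy (n := n)) := by
  rintro ⟨i, x⟩ ⟨j, y⟩ h
  obtain rfl : i = j := add_right_cancel (congrArg Prod.fst h)
  have hxy := congrArg Prod.snd h
  simp only [nextCopy] at hxy
  split_ifs at hxy <;> simpa using hxy

lemma flowerCover_fst_eq_iff {v w : ℤ × Fin 4} :
    (flowerCover n v).1 = (flowerCover n w).1 ↔ (n : ℤ) ∣ v.1 - w.1 := by
  rw [← CharP.intCast_eq_zero_iff (Fin n) n, Int.cast_sub, sub_eq_zero]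
  rfl

lemma flowerCover_snd_eq_zero_iff {v : ℤ × Fin 4} : (flowerCover n v).2 = 0 ↔ v.2 = 0 := by
  have h0 : (Equiv.swap (2 : Fin 4) 3 ^ (v.1 / n)) 0 = 0 :=
    Equiv.Perm.zpow_apply_eq_self_of_apply_eq_self (by decide) _
  exact (Equiv.injective _).eq_iff' h0

lemma flowerCover_injective_on_copy (k : ℤ) :
    Function.Injective fun t ↦ flowerCover n (k, t) :=
  fun _ _ h ↦ (Equiv.swap 2 3 ^ (k / n)).injective (congrArg Prod.snd h)

lemma exists_flowerCover_eq {y : FV n} (hy : y.1 = (k : Fin n)) :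
    ∃ t, flowerCover n (k, t) = y := by
  obtain ⟨t, ht⟩ := (Equiv.swap 2 3 ^ (k / n)).surjective y.2
  exact ⟨t, Prod.ext hy.symm ht⟩

lemma flowerCover_add_one (k : ℤ) (t : Fin 4) :
    flowerCover n (k + 1, t) = nextCopy (flowerCover n (k, t)) := by
  have hn : (0 : ℤ) < n := mod_cast Nat.pos_of_neZero n
  have hwrap : (k : Fin n) + 1 = 0 ↔ (n : ℤ) ∣ k + 1 := by
    rw [← CharP.intCast_eq_zero_iff (Fin n) n]; push_cast; rfl
  simp only [flowerCover, nextCopy, Int.cast_add, Int.cast_one, hwrap]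
  congr 1
  split_ifs with h
  · have hdiv : (k + 1) / n = k / n + 1 := by
      obtain ⟨q, hq⟩ := h
      have hk : k = n - 1 + n * (q - 1) := by linarith
      rw [hq, Int.mul_ediv_cancel_left _ hn.ne', hk, Int.add_mul_ediv_left _ _ hn.ne',
        Int.ediv_eq_zero_of_lt (by lia) (by lia)]
      ring
    rw [hdiv, add_comm, zpow_one_add, Equiv.Perm.mul_apply]
  · have hk := Int.emod_add_mul_ediv k n
    have hmod : k % n + 1 ≠ n := fun hmod ↦ h ⟨k / n + 1, by linarith⟩
    have hnonneg := Int.emod_nonneg k hn.ne'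
    have hlt := Int.emod_lt_of_pos k hn
    have hdivmod : (k + 1) / n = k / n ∧ (k + 1) % n = k % n + 1 :=
      (Int.ediv_emod_unique hn).2 ⟨by linarith, by lia, by lia⟩
    rw [hdivmod.1]

lemma flowerSnark_eq_fromRel_nextCopy (n : ℕ) [NeZero n] :
    flowerSnark n = SimpleGraph.fromRel fun v w ↦
      (v.1 = w.1 ∧ v.2 = 0 ∧ w.2 ≠ 0) ∨ (v.2 ≠ 0 ∧ w = nextCopy v) := by
  unfold flowerSnark
  congr 1
  ext ⟨i, x⟩ ⟨j, y⟩
  have hsucc : ((i + 1 : Fin n) : ℕ) = (i + 1) % n := by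
    rw [Fin.val_add, Fin.val_one', Nat.add_mod_mod]
  have hj := j.isLt
  simp only [nextCopy, Prod.mk.injEq]
  simp only [Fin.ext_iff (a := j), Fin.ext_iff (a := i + 1), hsucc, Fin.val_zero]
  rcases eq_or_ne (i + 1 : ℕ) n with hlast | hlast
  · have hmod : (i + 1 : ℕ) % n = 0 := by rw [hlast, Nat.mod_self]
    have hswap : x = 1 ∧ y = 1 ∨ x = 2 ∧ y = 3 ∨ x = 3 ∧ y = 2 ↔
        x ≠ 0 ∧ y = Equiv.swap 2 3 x := by decide +revert
    simp only [hmod, if_true]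
    grind
  · have hmod : (i + 1 : ℕ) % n = i + 1 := Nat.mod_eq_of_lt (by lia)
    have hlane : x = 1 ∧ y = 1 ∨ x = 2 ∧ y = 2 ∨ x = 3 ∧ y = 3 ↔ x ≠ 0 ∧ y = x := by
      decide +revert
    simp only [hmod]
    grind

lemma flowerSnark_adj_iff (hn : 2 ≤ n) {v w : FV n} : (flowerSnark n).Adj v w ↔
    (v.1 = w.1 ∧ (v.2 = 0 ↔ w.2 ≠ 0)) ∨ (v.2 ≠ 0 ∧ w = nextCopy v) ∨
      (w.2 ≠ 0 ∧ v = nextCopy w) := by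
  have hne (v : FV n) : nextCopy v ≠ v := by
    have : Nontrivial (Fin n) := Fin.nontrivial_iff_two_le.2 hn
    exact fun h ↦ one_ne_zero (add_eq_left.1 (congrArg Prod.fst h))
  have hv := hne v
  have hw := hne w
  rw [flowerSnark_eq_fromRel_nextCopy, SimpleGraph.fromRel_adj]
  grind

lemma flowerSnark_adj_flowerCover (hn : 2 ≤ n) {v w : ℤ × Fin 4} (hvw : flowerLadder.Adj v w) :
    (flowerSnark n).Adj (flowerCover n v) (flowerCover n w) := by
  obtain ⟨k, t⟩ := v
  obtain ⟨j, s⟩ := w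
  simp only [flowerSnark_adj_iff hn, flowerCover_snd_eq_zero_iff, ne_eq]
  rcases hvw with ⟨hkj, hhub⟩ | ⟨hts, ht, hkj⟩
  · exact Or.inl ⟨congrArg Int.cast hkj, hhub⟩
  · obtain rfl : t = s := hts
    rcases (abs_eq zero_le_one).1 hkj with hkj | hkj
    · obtain rfl : k = j + 1 := by lia
      exact Or.inr (Or.inr ⟨ht, flowerCover_add_one j t⟩)
    · obtain rfl : j = k + 1 := by lia
      exact Or.inr (Or.inl ⟨ht, flowerCover_add_one k t⟩)

lemma exists_flowerLadder_adj_of_adj_flowerCover (hn : 2 ≤ n) {v : ℤ × Fin 4} {y : FV n}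
    (hy : (flowerSnark n).Adj (flowerCover n v) y) :
    ∃ w, flowerLadder.Adj v w ∧ flowerCover n w = y := by
  obtain ⟨k, t⟩ := v
  rcases (flowerSnark_adj_iff hn).1 hy with ⟨hfst, hhub⟩ | ⟨ht, rfl⟩ | ⟨ht, hnext⟩
  · obtain ⟨s, rfl⟩ := exists_flowerCover_eq hfst.symm
    rw [ne_eq, flowerCover_snd_eq_zero_iff, flowerCover_snd_eq_zero_iff] at hhub
    exact ⟨(k, s), Or.inl ⟨rfl, hhub⟩, rfl⟩
  · rw [ne_eq, flowerCover_snd_eq_zero_iff] at ht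
    exact ⟨(k + 1, t), Or.inr ⟨rfl, ht, by simp⟩, flowerCover_add_one k t⟩
  · obtain ⟨j, rfl⟩ : ∃ j, k = j + 1 := ⟨k - 1, by simp⟩
    rw [flowerCover_add_one] at hnext
    obtain rfl := nextCopy_injective hnext
    rw [ne_eq, flowerCover_snd_eq_zero_iff] at ht
    exact ⟨(j, t), Or.inr ⟨rfl, ht, by simp⟩, rfl⟩

theorem isGraphCovering_flowerCover (hn : 3 ≤ n) :
    IsGraphCovering flowerLadder (flowerSnark n) (flowerCover n) := by
  refine fun v ↦ ⟨?mapsTo, ?injOn, ?surjOn⟩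
  case mapsTo =>
    rintro w (rfl | hw)
    · exact Or.inl rfl
    · exact Or.inr (flowerSnark_adj_flowerCover (by lia) hw)
  case injOn =>
    rintro ⟨k, t⟩ hw ⟨j, s⟩ hw' h
    have hdvd : (n : ℤ) ∣ k - j := flowerCover_fst_eq_iff.1 (congrArg Prod.fst h)
    have hk := abs_sub_le_one_of_mem_closedNeighborSet hw
    have hj := abs_sub_le_one_of_mem_closedNeighborSet hw'
    have hdist : |k - j| ≤ 2 := by grind
    obtain rfl : k = j := sub_eq_zero.1 (Int.eq_zero_of_abs_lt_dvd hdvd (by lia))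
    rw [flowerCover_injective_on_copy k h]
  case surjOn =>
    rintro y (rfl | hy)
    · exact ⟨v, Or.inl rfl, rfl⟩
    · obtain ⟨w, hw, rfl⟩ := exists_flowerLadder_adj_of_adj_flowerCover (by lia) hy
      exact ⟨w, Or.inr hw, rfl⟩

lemma copyWeight_eq_ncard_copySlice (S : Set (FV n)) {m : ℕ} (hkm : k ≡ m [ZMOD n]) :
    copyWeight S m = (copySlice (flowerCover n ⁻¹' S) k).ncard := by
  have hval : ((k : Fin n) : ℕ) = m % n := by
    rw [Fin.val_intCast, hkm, ← Int.natCast_mod, Int.toNat_natCast]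
  rw [copyWeight, ← Set.ncard_image_of_injective _ (flowerCover_injective_on_copy (n := n) k)]
  congr 1
  ext y
  constructor
  · rintro ⟨hyS, hy⟩
    obtain ⟨t, rfl⟩ := exists_flowerCover_eq (Fin.ext (hy.trans hval.symm))
    exact ⟨t, hyS, rfl⟩
  · rintro ⟨t, ht, rfl⟩
    exact ⟨ht, hval⟩

end FlowerCover

lemma MinimalDominating.minimal_isDominatingSet {n : ℕ} {S : Set (FV n)}
    (hS : MinimalDominating n S) : Minimal (IsDominatingSet (flowerSnark n)) S := by
  have hdom : Dominating n = IsDominatingSet (flowerSnark n) := by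
    ext T
    refine forall_congr' fun v ↦ ?_
    simp only [Set.Nonempty, Set.mem_inter_iff, mem_closedNeighborSet]
    grind
  rw [Set.minimal_iff_forall_ssubset, ← hdom]
  exact hS

theorem flowerSnark_minimalDominating_weight3_general (n : ℕ) (hn : 3 ≤ n)
    (S : Set (FV n)) (hS : MinimalDominating n S)
    (i : Fin n) (h3 : copyWeight S (i : ℕ) = 3) :
    copyWeight S ((i : ℕ) + n - 1) = 1 ∧ copyWeight S ((i : ℕ) + 1) = 1 := by
  have : NeZero n := ⟨by lia⟩
  have hmin : Minimal (IsDominatingSet flowerLadder) (flowerCover n ⁻¹' S) :=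
    minimal_isDominatingSet_preimage (isGraphCovering_flowerCover hn) hS.minimal_isDominatingSet
  have hprev : ((i : ℕ) : ℤ) + (-1 : ℤˣ) ≡ ((i : ℕ) + n - 1 : ℕ) [ZMOD n] := by
    rw [Nat.cast_sub (by lia)]
    simp [Int.ModEq, ← sub_eq_add_neg, add_sub_right_comm]
  have hnext : ((i : ℕ) : ℤ) + (1 : ℤˣ) ≡ ((i : ℕ) + 1 : ℕ) [ZMOD n] := by
    simp [Int.ModEq.refl]
  rw [copyWeight_eq_ncard_copySlice S (Int.ModEq.refl _)] at h3
  rw [copyWeight_eq_ncard_copySlice S hprev,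
    copyWeight_eq_ncard_copySlice S hnext]
  exact ⟨ncard_copySlice_side_eq_one hmin h3 (-1),
    ncard_copySlice_side_eq_one hmin h3 1⟩

/-- If `n ≥ 4`, `S` is a minimal dominating set of the flower snark `J_n`, and
some copy `J^i` has weight 3 in `S`, then both adjacent copies `J^{i-1}` and
`J^{i+1}` (indices mod `n`) have weight 1 in `S`. -/
theorem flowerSnark_minimalDominating_weight3 (n : ℕ) (hn : 4 ≤ n)
    (S : Set (FV n)) (hS : MinimalDominating n S)
    (i : Fin n) (h3 : copyWeight S (i : ℕ) = 3) :
    copyWeight S ((i : ℕ) + n - 1) = 1 ∧ copyWeight S ((i : ℕ) + 1) = 1 :=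
  flowerSnark_minimalDominating_weight3_general n (by lia) S hS i h3
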